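/- If (X_n) is c.i.d. with values in a Polish space E, then its distribution λ on E^∞ coincides on the σ-field V with the exchangeable law μ(·) = ∫ α^∞(ω)(·) P(dω), where α is the directing measure and V is the σ-field on E^∞ generated by the maps x ↦ limsup_n (1/n)(f(x_1) + ... + f(x_n)) for bounded measurable f : E → ℝ. -/

import Mathlib

open MeasureTheory Filter

/-- Condition (5): `(X n)` (indexed from 1) is c.i.d., i.e.
`[X 1, …, X n, X (n+2)] ∼ [X 1, …, X n, X (n+1)]` for all `n ≥ 0`. -/
def IsCIDnat {Ω E : Type*} {mΩ : MeasurableSpace Ω} [MeasurableSpace E]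
    (μ : Measure Ω) (X : ℕ → Ω → E) : Prop :=
  ∀ n : ℕ,
    Measure.map (fun ω (i : Fin (n + 1)) =>
        if (i : ℕ) < n then X ((i : ℕ) + 1) ω else X (n + 2) ω) μ
      = Measure.map (fun ω (i : Fin (n + 1)) => X ((i : ℕ) + 1) ω) μ

/-! Let `P` be the law of `(ω, x)` when `x` is drawn from `α^∞(ω)`. For bounded measurable `f`, the
averages of `f` along `x` tend to `∫ f dα(ω)` by the strong law of large numbers. So do the averages
along `X(ω)`: their differences with the averages of `E[f(X_{n+1}) | 𝒢_n]` vanish by the strong law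
for martingale differences, and `E[f(X_{n+1}) | 𝒢_n] = E[∫ f dα | 𝒢_n]` tends to `∫ f dα` by Lévy's
theorem. Hence every generator of `𝒱` takes `P`-almost surely the same value at `X(ω)` and at `x`,
so that `X(ω) ∈ A ↔ x ∈ A` holds `P`-almost surely for `A ∈ 𝒱`. -/

open ProbabilityTheory
open scoped Topology BoundedContinuousFunction ENNReal

lemma tendsto_average_zero_of_tendsto_sum_div {d : ℕ → ℝ} {c : ℝ}
    (h : Tendsto (fun n ↦ ∑ i ∈ Finset.range n, d i / (i + 1)) atTop (𝓝 c)) :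
    Tendsto (fun n : ℕ ↦ (∑ i ∈ Finset.range n, d i) / n) atTop (𝓝 0) := by
  set M : ℕ → ℝ := fun n ↦ ∑ i ∈ Finset.range n, d i / (i + 1)
  have summation_by_parts (n : ℕ) :
      ∑ i ∈ Finset.range n, d i = n * M n - ∑ i ∈ Finset.range n, M i := by
    induction n with
    | zero => simp
    | succ n ih =>
      have hM : M (n + 1) = M n + d n / (n + 1) := Finset.sum_range_succ _ n
      rw [Finset.sum_range_succ, Finset.sum_range_succ, ih, hM]
      push_cast
      field_simp
      ring
  have hlim : Tendsto (fun n : ℕ ↦ M n - (n : ℝ)⁻¹ * ∑ i ∈ Finset.range n, M i) atTop (𝓝 0) := by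
    simpa using h.sub h.cesaro
  refine hlim.congr' ?_
  filter_upwards [eventually_ne_atTop 0] with n hn
  rw [summation_by_parts]
  field_simp

lemma eLpNorm_one_le_ofReal_add_integral_sq {Ω : Type*} {mΩ : MeasurableSpace Ω} {μ : Measure Ω}
    [IsFiniteMeasure μ] {f : Ω → ℝ} (hf : MemLp f 2 μ) :
    eLpNorm f 1 μ ≤ ENNReal.ofReal (μ.real Set.univ + ∫ ω, f ω ^ 2 ∂μ) := by
  have hfi : Integrable f μ := hf.integrable one_le_two
  rw [eLpNorm_one_eq_lintegral_enorm, ← ofReal_integral_norm_eq_lintegral_enorm hfi]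
  refine ENNReal.ofReal_le_ofReal ?_
  calc ∫ ω, ‖f ω‖ ∂μ ≤ ∫ ω, (1 + f ω ^ 2) ∂μ :=
        integral_mono hfi.norm ((integrable_const 1).add hf.integrable_sq) fun ω ↦ by
          rw [Real.norm_eq_abs]
          nlinarith [sq_abs (f ω), sq_nonneg (|f ω| - 1)]
    _ = μ.real Set.univ + ∫ ω, f ω ^ 2 ∂μ := by
        rw [integral_add (integrable_const 1) hf.integrable_sq]
        simp

/-- A square-integrable martingale difference sequence, indexed so that `Z n` is the increment
between the times `n` and `n + 1`. -/
structure IsMartingaleDifference {Ω : Type*} {mΩ : MeasurableSpace Ω} (Z : ℕ → Ω → ℝ)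
    (𝒢 : Filtration ℕ mΩ) (μ : Measure Ω) : Prop where
  stronglyMeasurable (n : ℕ) : StronglyMeasurable[𝒢 (n + 1)] (Z n)
  memLp_two (n : ℕ) : MemLp (Z n) 2 μ
  condExp_eq_zero (n : ℕ) : μ[Z n | 𝒢 n] =ᵐ[μ] 0

namespace IsMartingaleDifference

variable {Ω : Type*} {mΩ : MeasurableSpace Ω} {μ : Measure Ω}
  {𝒢 : Filtration ℕ mΩ} {Z : ℕ → Ω → ℝ}

lemma smul (hZ : IsMartingaleDifference Z 𝒢 μ) (c : ℕ → ℝ) :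
    IsMartingaleDifference (fun n ↦ c n • Z n) 𝒢 μ where
  stronglyMeasurable n := (hZ.stronglyMeasurable n).const_smul (c n)
  memLp_two n := (hZ.memLp_two n).const_smul (c n)
  condExp_eq_zero n := by
    filter_upwards [condExp_smul (c n) (Z n) (𝒢 n) (μ := μ), hZ.condExp_eq_zero n] with ω h h0
    simp [h, h0]

lemma memLp_sum (hZ : IsMartingaleDifference Z 𝒢 μ) (n : ℕ) :
    MemLp (∑ i ∈ Finset.range n, Z i) 2 μ :=
  memLp_finsetSum' _ fun i _ ↦ hZ.memLp_two i

variable [IsFiniteMeasure μ]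

lemma martingale_sum (hZ : IsMartingaleDifference Z 𝒢 μ) :
    Martingale (fun n ↦ ∑ i ∈ Finset.range n, Z i) 𝒢 μ := by
  refine martingale_of_condExp_sub_eq_zero_nat (fun n ↦ ?_) (fun n ↦ ?_) fun n ↦ ?_
  · exact Finset.stronglyMeasurable_sum _ fun i hi ↦
      (hZ.stronglyMeasurable i).mono (𝒢.mono (Finset.mem_range.1 hi))
  · exact integrable_finsetSum' _ fun i _ ↦ (hZ.memLp_two i).integrable one_le_two
  · simpa only [Finset.sum_range_succ_sub_sum] using hZ.condExp_eq_zero n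

lemma integral_mul_eq_zero (hZ : IsMartingaleDifference Z 𝒢 μ) {n : ℕ} {g : Ω → ℝ}
    (hg : StronglyMeasurable[𝒢 n] g) (hg2 : MemLp g 2 μ) : ∫ ω, g ω * Z n ω ∂μ = 0 := by
  have hpull : μ[g * Z n | 𝒢 n] =ᵐ[μ] g * μ[Z n | 𝒢 n] :=
    condExp_mul_of_stronglyMeasurable_left hg (hg2.integrable_mul (hZ.memLp_two n))
      ((hZ.memLp_two n).integrable one_le_two)
  calc ∫ ω, g ω * Z n ω ∂μ = ∫ ω, (μ[g * Z n | 𝒢 n]) ω ∂μ := (integral_condExp (𝒢.le n)).symm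
    _ = ∫ _, 0 ∂μ := integral_congr_ae <| by
      filter_upwards [hpull, hZ.condExp_eq_zero n] with ω h h0
      simp [h, h0]
    _ = 0 := integral_zero _ _

lemma integral_sum_sq (hZ : IsMartingaleDifference Z 𝒢 μ) (n : ℕ) :
    ∫ ω, (∑ i ∈ Finset.range n, Z i) ω ^ 2 ∂μ = ∑ i ∈ Finset.range n, ∫ ω, Z i ω ^ 2 ∂μ := by
  induction n with
  | zero => simp
  | succ n ih =>
    set S := ∑ i ∈ Finset.range n, Z i
    have hS : MemLp S 2 μ := hZ.memLp_sum n
    have hSZ : Integrable (fun ω ↦ 2 * (S ω * Z n ω)) μ :=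
      (hS.integrable_mul (hZ.memLp_two n)).const_mul 2
    have hadd : Integrable (fun ω ↦ S ω ^ 2 + 2 * (S ω * Z n ω)) μ := hS.integrable_sq.add hSZ
    calc ∫ ω, (∑ i ∈ Finset.range (n + 1), Z i) ω ^ 2 ∂μ
        = ∫ ω, (S ω ^ 2 + 2 * (S ω * Z n ω)) + Z n ω ^ 2 ∂μ := by
          simp only [Finset.sum_range_succ, Pi.add_apply, S]
          congr with ω
          ring
      _ = ∫ ω, S ω ^ 2 ∂μ + 2 * ∫ ω, S ω * Z n ω ∂μ + ∫ ω, Z n ω ^ 2 ∂μ := by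
          rw [integral_add hadd (hZ.memLp_two n).integrable_sq,
            integral_add hS.integrable_sq hSZ, integral_const_mul]
      _ = ∑ i ∈ Finset.range (n + 1), ∫ ω, Z i ω ^ 2 ∂μ := by
          rw [hZ.integral_mul_eq_zero (hZ.martingale_sum.stronglyMeasurable n) hS, ih,
            Finset.sum_range_succ, mul_zero, add_zero]

lemma ae_exists_tendsto_sum (hZ : IsMartingaleDifference Z 𝒢 μ)
    (hsum : Summable fun n ↦ ∫ ω, Z n ω ^ 2 ∂μ) :
    ∀ᵐ ω ∂μ, ∃ c, Tendsto (fun n ↦ ∑ i ∈ Finset.range n, Z i ω) atTop (𝓝 c) := by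
  simp only [← Finset.sum_apply]
  refine hZ.martingale_sum.submartingale.exists_ae_tendsto_of_bdd
    (R := (μ.real Set.univ + ∑' n, ∫ ω, Z n ω ^ 2 ∂μ).toNNReal) fun n ↦
    (eLpNorm_one_le_ofReal_add_integral_sq (hZ.memLp_sum n)).trans (ENNReal.ofReal_le_ofReal ?_)
  rw [hZ.integral_sum_sq]
  gcongr
  exact hsum.sum_le_tsum _ fun i _ ↦ integral_nonneg fun _ ↦ sq_nonneg _

lemma ae_tendsto_average_zero (hZ : IsMartingaleDifference Z 𝒢 μ)
    (hsum : Summable fun n : ℕ ↦ (∫ ω, Z n ω ^ 2 ∂μ) / (n + 1) ^ 2) :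
    ∀ᵐ ω ∂μ, Tendsto (fun n : ℕ ↦ (∑ i ∈ Finset.range n, Z i ω) / n) atTop (𝓝 0) := by
  have hconv := (hZ.smul fun n ↦ ((n : ℝ) + 1)⁻¹).ae_exists_tendsto_sum <| by
    simpa [mul_pow, integral_const_mul, inv_pow, div_eq_inv_mul] using hsum
  filter_upwards [hconv] with ω ⟨c, hc⟩
  exact tendsto_average_zero_of_tendsto_sum_div (c := c) <| by
    simpa [div_eq_inv_mul] using hc

lemma ae_tendsto_average_zero_of_integral_sq_le (hZ : IsMartingaleDifference Z 𝒢 μ) {K : ℝ}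
    (hK : ∀ n, ∫ ω, Z n ω ^ 2 ∂μ ≤ K) :
    ∀ᵐ ω ∂μ, Tendsto (fun n : ℕ ↦ (∑ i ∈ Finset.range n, Z i ω) / n) atTop (𝓝 0) := by
  have hbase : Summable fun n : ℕ ↦ K / ((n : ℝ) + 1) ^ 2 := by
    simpa [div_eq_mul_inv] using
      ((summable_nat_add_iff 1).2 (Real.summable_nat_pow_inv.2 one_lt_two)).mul_left K
  refine hZ.ae_tendsto_average_zero (hbase.of_nonneg_of_le (fun n ↦ ?_) fun n ↦ ?_)
  · exact div_nonneg (integral_nonneg fun _ ↦ sq_nonneg _) (sq_nonneg _)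
  · gcongr
    exact hK n

end IsMartingaleDifference

section KernelIntegrals

variable {Ω E : Type*} {m mΩ : MeasurableSpace Ω} {mE : MeasurableSpace E} {μ : Measure Ω}
  {κ : Kernel Ω E} {f : E → ℝ}

lemma aestronglyMeasurable_of_forall_of_tendsto_ae {u : ℕ → Ω → ℝ} {v : Ω → ℝ}
    (hu : ∀ n, AEStronglyMeasurable[m] (u n) μ)
    (huv : ∀ᵐ ω ∂μ, Tendsto (fun n ↦ u n ω) atTop (𝓝 (v ω))) : AEStronglyMeasurable[m] v μ := by
  refine ⟨fun ω ↦ limsup (fun n ↦ (hu n).mk (u n) ω) atTop,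
    (Measurable.limsup fun n ↦ (hu n).stronglyMeasurable_mk.measurable).stronglyMeasurable, ?_⟩
  filter_upwards [huv, ae_all_iff.2 fun n ↦ (hu n).ae_eq_mk] with ω hlim hmk
  exact (hlim.congr hmk).limsup_eq.symm

lemma integral_measure_comp (hf : Integrable f (κ ∘ₘ μ)) :
    ∫ x, f x ∂(κ ∘ₘ μ) = ∫ ω, ∫ x, f x ∂(κ ω) ∂μ := by
  rw [Measure.comp_eq_comp_const_apply] at hf ⊢
  rw [Kernel.integral_comp hf]
  simp

lemma integrable_integral_of_integrable_comp (hf : Integrable f (κ ∘ₘ μ)) :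
    Integrable (fun ω ↦ ∫ x, f x ∂(κ ω)) μ := by
  rw [Measure.comp_eq_comp_const_apply] at hf
  simpa using hf.integral_comp

lemma eLpNorm_one_integral_kernel_le (hf : AEMeasurable f (κ ∘ₘ μ)) :
    eLpNorm (fun ω ↦ ∫ x, f x ∂(κ ω)) 1 μ ≤ eLpNorm f 1 (κ ∘ₘ μ) := by
  simp only [eLpNorm_one_eq_lintegral_enorm]
  rw [Measure.lintegral_bind κ.aemeasurable hf.enorm]
  exact lintegral_mono fun ω ↦ enorm_integral_le_lintegral_enorm f

lemma tendsto_eLpNorm_integral_kernel_sub {g : ℕ → E → ℝ} (hf : Integrable f (κ ∘ₘ μ))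
    (hg : ∀ n, Integrable (g n) (κ ∘ₘ μ))
    (hgf : Tendsto (fun n ↦ eLpNorm (g n - f) 1 (κ ∘ₘ μ)) atTop (𝓝 0)) :
    Tendsto (fun n ↦ eLpNorm ((fun ω ↦ ∫ x, g n x ∂(κ ω)) - fun ω ↦ ∫ x, f x ∂(κ ω)) 1 μ)
      atTop (𝓝 0) := by
  refine tendsto_of_tendsto_of_tendsto_of_le_of_le tendsto_const_nhds hgf (fun _ ↦ zero_le)
    fun n ↦ ?_
  have hsub : (fun ω ↦ ∫ x, g n x ∂(κ ω)) - (fun ω ↦ ∫ x, f x ∂(κ ω))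
      =ᵐ[μ] fun ω ↦ ∫ x, (g n - f) x ∂(κ ω) := by
    filter_upwards [Measure.ae_integrable_of_integrable_comp (hg n),
      Measure.ae_integrable_of_integrable_comp hf] with ω hgω hfω
    exact (integral_sub hgω hfω).symm
  rw [eLpNorm_congr_ae hsub]
  exact eLpNorm_one_integral_kernel_le ((hg n).sub hf).aemeasurable

lemma exists_boundedContinuous_tendsto_eLpNorm_sub [TopologicalSpace E]
    [TopologicalSpace.PseudoMetrizableSpace E] [BorelSpace E] {ν : Measure E} [IsFiniteMeasure ν]
    (hf : Integrable f ν) :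
    ∃ g : ℕ → E →ᵇ ℝ, Tendsto (fun n ↦ eLpNorm (⇑(g n) - f) 1 ν) atTop (𝓝 0) := by
  have happrox (n : ℕ) : ∃ g : E →ᵇ ℝ, eLpNorm (f - ⇑g) 1 ν ≤ (n : ℝ≥0∞)⁻¹ ∧ MemLp g 1 ν :=
    (memLp_one_iff_integrable.2 hf).exists_boundedContinuous_eLpNorm_sub_le ENNReal.one_ne_top
      (ENNReal.inv_ne_zero.2 (ENNReal.natCast_ne_top n))
  choose g hg using happrox
  refine ⟨g, tendsto_of_tendsto_of_tendsto_of_le_of_le tendsto_const_nhds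
    ENNReal.tendsto_inv_nat_nhds_zero (fun _ ↦ zero_le) fun n ↦ ?_⟩
  rw [eLpNorm_sub_comm]
  exact (hg n).1

lemma aestronglyMeasurable_integral_of_forall_boundedContinuous [TopologicalSpace E]
    [TopologicalSpace.PseudoMetrizableSpace E] [BorelSpace E] [IsFiniteMeasure μ]
    [IsFiniteKernel κ]
    (hm : ∀ g : E →ᵇ ℝ, AEStronglyMeasurable[m] (fun ω ↦ ∫ x, g x ∂(κ ω)) μ)
    (hf : Integrable f (κ ∘ₘ μ)) : AEStronglyMeasurable[m] (fun ω ↦ ∫ x, f x ∂(κ ω)) μ := by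
  obtain ⟨g, hgf⟩ := exists_boundedContinuous_tendsto_eLpNorm_sub hf
  have hg (n : ℕ) : Integrable (g n) (κ ∘ₘ μ) := (g n).integrable _
  obtain ⟨ns, -, hns⟩ := (tendstoInMeasure_of_tendsto_eLpNorm one_ne_zero
    (fun n ↦ (integrable_integral_of_integrable_comp (hg n)).aestronglyMeasurable)
    (integrable_integral_of_integrable_comp hf).aestronglyMeasurable
    (tendsto_eLpNorm_integral_kernel_sub hf hg hgf)).exists_seq_tendsto_ae
  exact aestronglyMeasurable_of_forall_of_tendsto_ae (fun n ↦ hm (g (ns n))) hns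

end KernelIntegrals

section ProductMeasures

variable {E : Type*} {mE : MeasurableSpace E}

lemma ae_tendsto_average_infinitePi (ν : Measure E) [IsProbabilityMeasure ν] {f : E → ℝ}
    (hf : Measurable f) (hfi : Integrable f ν) :
    ∀ᵐ x ∂Measure.infinitePi (fun _ : ℕ ↦ ν),
      Tendsto (fun n : ℕ ↦ (∑ i ∈ Finset.range n, f (x i)) / n) atTop (𝓝 (∫ y, f y ∂ν)) := by
  have heval (i : ℕ) := measurePreserving_eval_infinitePi (fun _ : ℕ ↦ ν) i
  have hident (i : ℕ) : IdentDistrib (fun x : ℕ → E ↦ f (x i)) (fun x ↦ f (x 0))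
      (Measure.infinitePi fun _ ↦ ν) (Measure.infinitePi fun _ ↦ ν) :=
    (IdentDistrib.mk (heval i).aemeasurable (heval 0).aemeasurable
      ((heval i).map_eq.trans (heval 0).map_eq.symm)).comp hf
  have hindep := iIndepFun_infinitePi (P := fun _ : ℕ ↦ ν) fun _ ↦ hf
  have hmean : ∫ x : ℕ → E, f (x 0) ∂Measure.infinitePi (fun _ ↦ ν) = ∫ y, f y ∂ν := by
    rw [← integral_map (heval 0).aemeasurable hf.aestronglyMeasurable]
    exact congrArg (fun ρ ↦ ∫ y, f y ∂ρ) (heval 0).map_eq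
  rw [← hmean]
  exact strong_law_ae_real _ ((heval 0).integrable_comp_of_integrable hfi)
    (fun i j hij ↦ hindep.indepFun hij) hident

lemma eq_infinitePi_of_forall_fin (ν : ℕ → Measure E) [∀ i, IsProbabilityMeasure (ν i)]
    {ρ : Measure (ℕ → E)} (hρ : ∀ (n : ℕ) (B : Fin n → Set E), (∀ i, MeasurableSet (B i)) →
      ρ {x | ∀ i : Fin n, x i ∈ B i} = ∏ i : Fin n, ν i (B i)) :
    ρ = Measure.infinitePi ν := by
  classical
  refine Measure.eq_infinitePi ν fun s t ht ↦ ?_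
  obtain ⟨n, hn⟩ := s.exists_nat_subset_range
  let B (i : ℕ) : Set E := if i ∈ s then t i else Set.univ
  have hB (i : ℕ) : MeasurableSet (B i) := by
    dsimp only [B]
    split_ifs
    exacts [ht i, .univ]
  have hbox : (s : Set ℕ).pi t = {x | ∀ i : Fin n, x i ∈ B i} := by
    ext x
    simp only [Set.mem_pi, SetLike.mem_coe, Set.mem_ofPred_eq, B]
    constructor
    · intro hx i
      split_ifs with hi
      exacts [hx i hi, trivial]
    · intro hx i hi
      simpa [hi] using hx ⟨i, Finset.mem_range.1 (hn hi)⟩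
  rw [hbox, hρ n (fun i ↦ B i) fun i ↦ hB i, Fin.prod_univ_eq_prod_range (fun i ↦ ν i (B i)),
    ← Finset.prod_subset hn fun i _ hi ↦ by simp [B, hi]]
  exact Finset.prod_congr rfl fun i hi ↦ by simp [B, hi]

end ProductMeasures

section ProductKernel

variable {Ω ι : Type*} {E : ι → Type*} {mΩ : MeasurableSpace Ω} {mE : ∀ i, MeasurableSpace (E i)}

lemma measurable_infinitePi_kernel (κ : ∀ i, Kernel Ω (E i)) [∀ i, IsMarkovKernel (κ i)] :
    Measurable fun ω ↦ Measure.infinitePi fun i ↦ κ i ω := by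
  refine Measurable.measure_of_isPiSystem_of_isProbabilityMeasure generateFrom_squareCylinders.symm
    (isPiSystem_squareCylinders (fun _ ↦ MeasurableSpace.isPiSystem_measurableSet)
      fun _ ↦ MeasurableSet.univ) ?_
  rintro _ ⟨s, t, ht, rfl⟩
  have ht (i : ι) : MeasurableSet (t i) := ht i trivial
  simp_rw [Measure.infinitePi_pi _ fun i (_ : i ∈ s) ↦ ht i]
  exact Finset.measurable_prod s fun i _ ↦ (κ i).measurable_coe (ht i)

/-- The product of a family of Markov kernels, sending `ω` to the product of the measures `κ i ω`.
For a constant family indexed by `ℕ` it is the random product measure `α^∞` of a random measure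
`α`. -/
noncomputable def infinitePiKernel (κ : ∀ i, Kernel Ω (E i)) [∀ i, IsMarkovKernel (κ i)] :
    Kernel Ω (∀ i, E i) where
  toFun ω := Measure.infinitePi fun i ↦ κ i ω
  measurable' := measurable_infinitePi_kernel κ

instance (κ : ∀ i, Kernel Ω (E i)) [∀ i, IsMarkovKernel (κ i)] :
    IsMarkovKernel (infinitePiKernel κ) :=
  ⟨fun ω ↦ inferInstanceAs (IsProbabilityMeasure (Measure.infinitePi fun i ↦ κ i ω))⟩

end ProductKernel

lemma ae_mem_iff_of_forall_ae_eq {Ω S ι β : Type*} {mΩ : MeasurableSpace Ω} {μ : Measure Ω}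
    {mβ : MeasurableSpace β} {g : ι → S → β} {F G : Ω → S}
    (h : ∀ i, ∀ᵐ ω ∂μ, g i (F ω) = g i (G ω)) {A : Set S}
    (hA : MeasurableSet[⨆ i, mβ.comap (g i)] A) : ∀ᵐ ω ∂μ, F ω ∈ A ↔ G ω ∈ A := by
  rw [MeasurableSpace.measurableSet_iSup] at hA
  induction hA with
  | basic A hA =>
    obtain ⟨i, B, -, rfl⟩ := hA
    filter_upwards [h i] with ω hω
    simp only [Set.mem_preimage, hω]
  | empty => simp
  | compl A _ ih =>
    filter_upwards [ih] with ω hω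
    simp only [Set.mem_compl_iff, hω]
  | iUnion A _ ih =>
    filter_upwards [ae_all_iff.2 ih] with ω hω
    simp only [Set.mem_iUnion, hω]

section CentredSequences

variable {Ω : Type*} {m mΩ : MeasurableSpace Ω} {μ : Measure Ω} [IsFiniteMeasure μ]

lemma integral_sub_condExp_sq_le {W : Ω → ℝ} (hm : m ≤ mΩ) (hW : MemLp W 2 μ) :
    ∫ ω, (W ω - (μ[W | m]) ω) ^ 2 ∂μ ≤ ∫ ω, W ω ^ 2 ∂μ :=
  calc ∫ ω, (W ω - (μ[W | m]) ω) ^ 2 ∂μ = ∫ ω, (Var[W; μ | m]) ω ∂μ := (integral_condExp hm).symm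
    _ ≤ ∫ ω, (μ[W ^ 2 | m]) ω ∂μ :=
      integral_mono_ae integrable_condVar integrable_condExp (condVar_ae_le_condExp_sq hm hW)
    _ = ∫ ω, W ω ^ 2 ∂μ := integral_condExp hm

lemma isMartingaleDifference_sub_condExp {𝒢 : Filtration ℕ mΩ} {W : ℕ → Ω → ℝ}
    (hWm : ∀ n, StronglyMeasurable[𝒢 (n + 1)] (W n)) (hW : ∀ n, MemLp (W n) 2 μ) :
    IsMartingaleDifference (fun n ↦ W n - μ[W n | 𝒢 n]) 𝒢 μ where
  stronglyMeasurable n :=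
    (hWm n).sub (stronglyMeasurable_condExp.mono (𝒢.mono n.le_succ))
  memLp_two n := (hW n).sub ((hW n).condExp one_le_two)
  condExp_eq_zero n := by
    filter_upwards [condExp_sub ((hW n).integrable one_le_two)
      (integrable_condExp (m := 𝒢 n) (f := W n)) (𝒢 n)] with ω hω
    rw [hω, condExp_of_stronglyMeasurable (𝒢.le n) stronglyMeasurable_condExp integrable_condExp]
    simp

lemma ae_tendsto_average_of_ae_tendsto_condExp {𝒢 : Filtration ℕ mΩ} {W : ℕ → Ω → ℝ} {v : Ω → ℝ}
    {K : ℝ} (hWm : ∀ n, StronglyMeasurable[𝒢 (n + 1)] (W n)) (hW : ∀ n, MemLp (W n) 2 μ)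
    (hK : ∀ n, ∫ ω, W n ω ^ 2 ∂μ ≤ K)
    (hv : ∀ᵐ ω ∂μ, Tendsto (fun n ↦ (μ[W n | 𝒢 n]) ω) atTop (𝓝 (v ω))) :
    ∀ᵐ ω ∂μ, Tendsto (fun n : ℕ ↦ (∑ i ∈ Finset.range n, W i ω) / n) atTop (𝓝 (v ω)) := by
  have hcentred :=
    (isMartingaleDifference_sub_condExp hWm hW).ae_tendsto_average_zero_of_integral_sq_le
      fun n ↦ (integral_sub_condExp_sq_le (𝒢.le n) (hW n)).trans (hK n)
  filter_upwards [hcentred, hv] with ω hω hvω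
  have hsum := hω.add hvω.cesaro
  rw [zero_add] at hsum
  refine hsum.congr fun n ↦ ?_
  simp only [Pi.sub_apply, Finset.sum_sub_distrib]
  ring

end CentredSequences

/-- Conditional identity in distribution of `Y` with respect to a filtration `𝒢`: given `𝒢 n`, the
variables `Y n, Y (n + 1), …` all have the same law. The variable `Y n` is observed at time
`n + 1`, and the conditional laws are encoded by the laws under `μ` restricted to the events of
`𝒢 n`. -/
structure IsCID {Ω E : Type*} {mΩ : MeasurableSpace Ω} [MeasurableSpace E] (Y : ℕ → Ω → E)
    (𝒢 : Filtration ℕ mΩ) (μ : Measure Ω) : Prop where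
  measurable_succ (n : ℕ) : Measurable[𝒢 (n + 1)] (Y n)
  map_restrict_succ (n : ℕ) {A : Set Ω} (hA : MeasurableSet[𝒢 n] A) :
    (μ.restrict A).map (Y (n + 1)) = (μ.restrict A).map (Y n)

/-- The kernel `κ` is the directing measure of `Y`: it is the almost sure weak limit of the
predictive distributions, in the sense that `∫ f dκ = lim E[f (Y n) | 𝒢 n]` for every bounded
continuous `f`. -/
def IsDirecting {Ω E : Type*} {mΩ : MeasurableSpace Ω} [TopologicalSpace E] [MeasurableSpace E]
    (κ : Kernel Ω E) (Y : ℕ → Ω → E) (𝒢 : Filtration ℕ mΩ) (μ : Measure Ω) : Prop :=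
  ∀ f : E →ᵇ ℝ, ∀ᵐ ω ∂μ,
    Tendsto (fun n ↦ (μ[fun ω' ↦ f (Y n ω') | 𝒢 n]) ω) atTop (𝓝 (∫ x, f x ∂(κ ω)))

namespace IsCIDnat

variable {Ω E : Type*} {mΩ : MeasurableSpace Ω} [MeasurableSpace E] {μ : Measure Ω}
  {X : ℕ → Ω → E}

lemma map_restrict_comap (hcid : IsCIDnat μ X) (hX : ∀ n, Measurable (X n)) (n : ℕ) {A : Set Ω}
    (hA : MeasurableSet[MeasurableSpace.pi.comap fun ω (i : Fin n) ↦ X (i + 1) ω] A) :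
    (μ.restrict A).map (X (n + 2)) = (μ.restrict A).map (X (n + 1)) := by
  obtain ⟨S, hS, rfl⟩ := hA
  ext B hB
  let T : Set (Fin (n + 1) → E) := {y | y (Fin.last n) ∈ B ∧ (fun i : Fin n ↦ y i.castSucc) ∈ S}
  have hT : MeasurableSet T :=
    (measurable_pi_apply _ hB).inter (measurable_pi_lambda _ (fun _ ↦ measurable_pi_apply _) hS)
  have hlaw := congrArg (· T) (hcid n)
  have hmeas : Measurable fun ω (i : Fin (n + 1)) ↦
      if (i : ℕ) < n then X (i + 1) ω else X (n + 2) ω :=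
    measurable_pi_lambda _ fun i ↦ by split_ifs <;> exact hX _
  rw [Measure.map_apply hmeas hT, Measure.map_apply (measurable_pi_lambda _ fun _ ↦ hX _) hT]
    at hlaw
  rw [Measure.map_apply (hX _) hB, Measure.map_apply (hX _) hB,
    Measure.restrict_apply (hX _ hB), Measure.restrict_apply (hX _ hB)]
  simpa [Set.preimage, Set.inter_def, T] using hlaw

lemma isCID (hcid : IsCIDnat μ X) (hX : ∀ n, Measurable (X n)) {𝒢 : Filtration ℕ mΩ}
    (h𝒢 : ∀ n, 𝒢 n = ⨆ i ∈ Set.Icc 1 n, MeasurableSpace.comap (X i) inferInstance) :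
    IsCID (fun n ↦ X (n + 1)) 𝒢 μ where
  measurable_succ n := by
    rw [h𝒢]
    exact (comap_measurable (X (n + 1))).mono
      (le_iSup₂_of_le (n + 1) ⟨Nat.le_add_left 1 n, le_rfl⟩ le_rfl) le_rfl
  map_restrict_succ n A hA := by
    refine hcid.map_restrict_comap hX n ((?_ : 𝒢 n ≤ _) A hA)
    rw [h𝒢]
    refine iSup₂_le fun i ⟨hi, hin⟩ ↦ ?_
    obtain ⟨j, rfl⟩ := Nat.exists_eq_add_of_le' hi
    exact ((measurable_pi_apply (⟨j, hin⟩ : Fin n)).comp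
      (comap_measurable fun ω (i : Fin n) ↦ X (i + 1) ω)).comap_le

end IsCIDnat

namespace IsCID

variable {Ω E : Type*} {mΩ : MeasurableSpace Ω} {mE : MeasurableSpace E}
  {μ : Measure Ω} {𝒢 : Filtration ℕ mΩ} {Y : ℕ → Ω → E} {κ : Kernel Ω E}

lemma measurable (hY : IsCID Y 𝒢 μ) (n : ℕ) : Measurable (Y n) :=
  (hY.measurable_succ n).mono (𝒢.le _) le_rfl

lemma map_restrict_add (hY : IsCID Y 𝒢 μ) {n : ℕ} {A : Set Ω} (hA : MeasurableSet[𝒢 n] A) (k : ℕ) :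
    (μ.restrict A).map (Y (k + n)) = (μ.restrict A).map (Y n) := by
  induction k with
  | zero => rw [zero_add]
  | succ k ih =>
    rw [← ih, Nat.succ_add]
    exact hY.map_restrict_succ _ (𝒢.mono (Nat.le_add_left n k) A hA)

variable [TopologicalSpace E] [TopologicalSpace.PseudoMetrizableSpace E] [BorelSpace E]
  [IsFiniteMeasure μ] [IsMarkovKernel κ]

lemma map_restrict_eq_comp (hY : IsCID Y 𝒢 μ) (hκ : IsDirecting κ Y 𝒢 μ) {n : ℕ} {A : Set Ω}
    (hA : MeasurableSet[𝒢 n] A) :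
    (μ.restrict A).map (Y n) = κ ∘ₘ (μ.restrict A) := by
  refine ext_of_forall_integral_eq_of_IsFiniteMeasure fun f ↦ ?_
  have hint (k : ℕ) : ∫ ω in A, (μ[fun ω' ↦ f (Y (k + n) ω') | 𝒢 (k + n)]) ω ∂μ
      = ∫ x, f x ∂((μ.restrict A).map (Y n)) := by
    have hf : Integrable (fun ω ↦ f (Y (k + n) ω)) μ :=
      (f.integrable _).comp_measurable (hY.measurable (k + n))
    rw [setIntegral_condExp (𝒢.le _) hf (𝒢.mono (Nat.le_add_left n k) A hA),
      ← hY.map_restrict_add hA k, integral_map (hY.measurable _).aemeasurable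
        f.continuous.aestronglyMeasurable]
  have hlim : Tendsto (fun k ↦ ∫ ω in A, (μ[fun ω' ↦ f (Y (k + n) ω') | 𝒢 (k + n)]) ω ∂μ) atTop
      (𝓝 (∫ ω in A, ∫ x, f x ∂(κ ω) ∂μ)) := by
    refine tendsto_integral_of_dominated_convergence (fun _ ↦ ‖f‖)
      (fun k ↦ integrable_condExp.integrableOn.aestronglyMeasurable) (integrable_const _)
      (fun k ↦ ae_restrict_of_ae (ae_bdd_abs_condExp_of_ae_bdd_abs
        (.of_forall fun ω ↦ f.norm_coe_le_norm _))) ?_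
    filter_upwards [ae_restrict_of_ae (hκ f)] with ω hω
    exact (tendsto_add_atTop_iff_nat n).2 hω
  simp only [hint] at hlim
  rw [integral_measure_comp (f.integrable _)]
  exact tendsto_nhds_unique tendsto_const_nhds hlim

lemma map_eq_comp (hY : IsCID Y 𝒢 μ) (hκ : IsDirecting κ Y 𝒢 μ) (n : ℕ) :
    μ.map (Y n) = κ ∘ₘ μ := by
  simpa using hY.map_restrict_eq_comp hκ (n := n) MeasurableSet.univ

lemma condExp_comp_ae_eq (hY : IsCID Y 𝒢 μ) (hκ : IsDirecting κ Y 𝒢 μ)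
    {f : E → ℝ} (hf : Integrable f (κ ∘ₘ μ)) (n : ℕ) :
    μ[fun ω ↦ f (Y n ω) | 𝒢 n] =ᵐ[μ] μ[fun ω ↦ ∫ x, f x ∂(κ ω) | 𝒢 n] := by
  have hfY : Integrable (fun ω ↦ f (Y n ω)) μ :=
    (hY.map_eq_comp hκ n ▸ hf).comp_measurable (hY.measurable n)
  refine ae_eq_condExp_of_forall_setIntegral_eq (𝒢.le n)
    (integrable_integral_of_integrable_comp hf) (fun _ _ _ ↦ integrable_condExp.integrableOn)
    (fun A hA _ ↦ ?_) stronglyMeasurable_condExp.aestronglyMeasurable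
  have hlaw := hY.map_restrict_eq_comp hκ hA
  have hfA : Integrable f (κ ∘ₘ (μ.restrict A)) := by
    rw [← hlaw]
    rw [← hY.map_eq_comp hκ n] at hf
    exact hf.mono_measure (Measure.map_mono Measure.restrict_le_self (hY.measurable n))
  rw [setIntegral_condExp (𝒢.le n) hfY hA, ← integral_measure_comp hfA, ← hlaw,
    integral_map (hY.measurable n).aemeasurable (hlaw ▸ hfA.aestronglyMeasurable)]

lemma ae_tendsto_condExp_comp (hY : IsCID Y 𝒢 μ) (hκ : IsDirecting κ Y 𝒢 μ)
    {f : E → ℝ} (hf : Integrable f (κ ∘ₘ μ)) :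
    ∀ᵐ ω ∂μ, Tendsto (fun n ↦ (μ[fun ω' ↦ f (Y n ω') | 𝒢 n]) ω) atTop
      (𝓝 (∫ x, f x ∂(κ ω))) := by
  have hcont (g : E →ᵇ ℝ) : AEStronglyMeasurable[⨆ n, 𝒢 n] (fun ω ↦ ∫ x, g x ∂(κ ω)) μ :=
    aestronglyMeasurable_of_forall_of_tendsto_ae (fun n ↦ (stronglyMeasurable_condExp.mono
      (le_iSup (fun n ↦ 𝒢 n) n)).aestronglyMeasurable) (hκ g)
  have hself : μ[fun ω ↦ ∫ x, f x ∂(κ ω) | ⨆ n, 𝒢 n] =ᵐ[μ] fun ω ↦ ∫ x, f x ∂(κ ω) :=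
    condExp_of_aestronglyMeasurable' (iSup_le 𝒢.le)
      (aestronglyMeasurable_integral_of_forall_boundedContinuous hcont hf)
      (integrable_integral_of_integrable_comp hf)
  filter_upwards [hself, tendsto_ae_condExp (ℱ := 𝒢) fun ω ↦ ∫ x, f x ∂(κ ω),
    ae_all_iff.2 (hY.condExp_comp_ae_eq hκ hf)] with ω hω hlevy heq
  rw [hω] at hlevy
  exact hlevy.congr fun n ↦ (heq n).symm

lemma ae_tendsto_average (hY : IsCID Y 𝒢 μ) (hκ : IsDirecting κ Y 𝒢 μ)
    {f : E → ℝ} (hf : Measurable f) (hf2 : MemLp f 2 (κ ∘ₘ μ)) :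
    ∀ᵐ ω ∂μ, Tendsto (fun n : ℕ ↦ (∑ i ∈ Finset.range n, f (Y i ω)) / n) atTop
      (𝓝 (∫ x, f x ∂(κ ω))) := by
  refine ae_tendsto_average_of_ae_tendsto_condExp (K := ∫ x, f x ^ 2 ∂(κ ∘ₘ μ))
    (fun n ↦ (hf.comp (hY.measurable_succ n)).stronglyMeasurable)
    (fun n ↦ (hY.map_eq_comp hκ n ▸ hf2).comp_of_map (hY.measurable n).aemeasurable)
    (fun n ↦ ?_) (hY.ae_tendsto_condExp_comp hκ (hf2.integrable one_le_two))
  rw [← hY.map_eq_comp hκ n, integral_map (hY.measurable n).aemeasurable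
    (hf.pow_const 2).aestronglyMeasurable]

end IsCID

/-- The superior limit of the Cesàro averages of `f` along the sequence `x`, the generator of
`averageLimsupSpace` attached to `f`. It has the junk value of a real `limsup` when the averages are
unbounded. -/
noncomputable def averageLimsup {E : Type*} (f : E → ℝ) (x : ℕ → E) : ℝ :=
  limsup (fun n : ℕ ↦ (∑ i ∈ Finset.range n, f (x i)) / n) atTop

/-- The σ-algebra on sequences generated by the superior limits of the averages of all bounded
measurable functions, the σ-field `𝒱` of the theorem. -/
noncomputable abbrev averageLimsupSpace (E : Type*) [MeasurableSpace E] : MeasurableSpace (ℕ → E) :=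
  ⨆ f : {f : E → ℝ // Measurable f ∧ ∃ C, ∀ x, |f x| ≤ C},
    MeasurableSpace.comap (averageLimsup f) inferInstance

section

variable {Ω E : Type*} {mΩ : MeasurableSpace Ω} {mE : MeasurableSpace E}

lemma measurable_averageLimsup {f : E → ℝ} (hf : Measurable f) : Measurable (averageLimsup f) :=
  Measurable.limsup fun n ↦
    (Finset.measurable_fun_sum _ fun i _ ↦ hf.comp (measurable_pi_apply i)).div_const (n : ℝ)

lemma averageLimsupSpace_le_pi : averageLimsupSpace E ≤ MeasurableSpace.pi :=
  iSup_le fun f ↦ (measurable_averageLimsup f.2.1).comap_le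

lemma IsCID.measurable_averageLimsupSpace {μ : Measure Ω} {𝒢 : Filtration ℕ mΩ} {Y : ℕ → Ω → E}
    (hY : IsCID Y 𝒢 μ) : Measurable[mΩ, averageLimsupSpace E] fun ω n ↦ Y n ω :=
  (measurable_pi_lambda _ hY.measurable).mono le_rfl averageLimsupSpace_le_pi

variable [TopologicalSpace E] [TopologicalSpace.PseudoMetrizableSpace E] [BorelSpace E]
  {μ : Measure Ω} [IsFiniteMeasure μ]
  {𝒢 : Filtration ℕ mΩ} {Y : ℕ → Ω → E} {κ : Kernel Ω E} [IsMarkovKernel κ]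

lemma IsCID.ae_averageLimsup_eq (hY : IsCID Y 𝒢 μ) (hκ : IsDirecting κ Y 𝒢 μ) {f : E → ℝ}
    (hf : Measurable f) (hf2 : MemLp f 2 (κ ∘ₘ μ)) :
    ∀ᵐ p ∂(μ ⊗ₘ infinitePiKernel fun _ : ℕ ↦ κ),
      averageLimsup f (fun n ↦ Y n p.1) = averageLimsup f p.2 := by
  have hYm : Measurable fun ω n ↦ Y n ω := measurable_pi_lambda _ hY.measurable
  have hfi := Measure.ae_integrable_of_integrable_comp (hf2.integrable one_le_two)
  refine Measure.ae_compProd_of_ae_ae (measurableSet_eq_fun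
    ((measurable_averageLimsup hf).comp (hYm.comp measurable_fst))
    ((measurable_averageLimsup hf).comp measurable_snd)) ?_
  filter_upwards [hY.ae_tendsto_average hκ hf hf2, hfi] with ω hω hfω
  filter_upwards [ae_tendsto_average_infinitePi (κ ω) hf hfω] with x hx
  exact hω.limsup_eq.trans hx.limsup_eq.symm

end

theorem stmt14_general {Ω E : Type*} {mΩ : MeasurableSpace Ω} [TopologicalSpace E]
    [TopologicalSpace.PseudoMetrizableSpace E] [MeasurableSpace E] [BorelSpace E] {μ : Measure Ω}
    [IsFiniteMeasure μ] {𝒢 : Filtration ℕ mΩ} {Y : ℕ → Ω → E} {κ : Kernel Ω E} [IsMarkovKernel κ]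
    (hY : IsCID Y 𝒢 μ) (hκ : IsDirecting κ Y 𝒢 μ) {A : Set (ℕ → E)}
    (hA : MeasurableSet[averageLimsupSpace E] A) :
    μ ((fun ω n ↦ Y n ω) ⁻¹' A) = ∫⁻ ω, Measure.infinitePi (fun _ : ℕ ↦ κ ω) A ∂μ := by
  let η := infinitePiKernel fun _ : ℕ ↦ κ
  have hAm : MeasurableSet A := averageLimsupSpace_le_pi A hA
  have hYm : Measurable fun ω n ↦ Y n ω := measurable_pi_lambda _ hY.measurable
  have hiff : ∀ᵐ p ∂(μ ⊗ₘ η), (fun n ↦ Y n p.1) ∈ A ↔ p.2 ∈ A :=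
    ae_mem_iff_of_forall_ae_eq (fun f : {f : E → ℝ // Measurable f ∧ ∃ C, ∀ x, |f x| ≤ C} ↦
      let ⟨C, hC⟩ := f.2.2
      hY.ae_averageLimsup_eq hκ f.2.1 (.of_bound f.2.1.aestronglyMeasurable C (.of_forall hC))) hA
  calc μ ((fun ω n ↦ Y n ω) ⁻¹' A) = (μ ⊗ₘ η).fst ((fun ω n ↦ Y n ω) ⁻¹' A) := by
        rw [Measure.fst_compProd]
    _ = (μ ⊗ₘ η) {p | (fun n ↦ Y n p.1) ∈ A} := Measure.fst_apply (hYm hAm)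
    _ = (μ ⊗ₘ η) {p | p.2 ∈ A} := measure_congr (eventuallyEq_set.2 hiff)
    _ = (μ ⊗ₘ η).snd A := (Measure.snd_apply hAm).symm
    _ = ∫⁻ ω, η ω A ∂μ := by rw [Measure.snd_compProd, Measure.bind_apply hAm η.aemeasurable]

/-- If `(X n)` is c.i.d. with values in a Polish space, then its distribution `λ` on
`E^∞` coincides, on the σ-field `𝒱` generated by the maps
`x ↦ limsup (1/n) (f x₁ + ⋯ + f xₙ)` for bounded measurable `f`, with the exchangeable
law `μ*(·) = ∫ α^∞(ω)(·) dP(ω)`, where `α` is the directing measure. -/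
theorem stmt14 {Ω E : Type*} {mΩ : MeasurableSpace Ω}
    [TopologicalSpace E] [PolishSpace E] [MeasurableSpace E] [BorelSpace E]
    (μ : Measure Ω) [IsProbabilityMeasure μ] (X : ℕ → Ω → E)
    (hX : ∀ n, Measurable (X n))
    (hcid : IsCIDnat μ X)
    (𝒢 : Filtration ℕ mΩ)
    (h𝒢 : ∀ n, 𝒢 n = ⨆ i ∈ Set.Icc 1 n, MeasurableSpace.comap (X i) inferInstance)
    -- `α` is the directing measure of `(X n)`
    (α : Ω → Measure E) (hαprob : ∀ ω, IsProbabilityMeasure (α ω))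
    (hαmeas : ∀ B : Set E, MeasurableSet B → Measurable fun ω => α ω B)
    (hα : ∀ f : BoundedContinuousFunction E ℝ, ∀ᵐ ω ∂μ,
      Tendsto (fun n => (μ[(fun ω' => f (X (n + 1) ω')) | 𝒢 n]) ω)
        atTop (nhds (∫ x, f x ∂(α ω))))
    -- `αinf ω` is the countable product `(α ω)^∞`
    (αinf : Ω → Measure (ℕ → E)) (hαinfprob : ∀ ω, IsProbabilityMeasure (αinf ω))
    (hαinf : ∀ ω (n : ℕ) (B : Fin n → Set E), (∀ i, MeasurableSet (B i)) →
      αinf ω {x : ℕ → E | ∀ i : Fin n, x (i : ℕ) ∈ B i} = ∏ i, α ω (B i))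
    -- the σ-field `𝒱` on `E^∞`
    (𝒱 : MeasurableSpace (ℕ → E))
    (h𝒱 : 𝒱 = ⨆ f : {f : E → ℝ // Measurable f ∧ ∃ C, ∀ x, |f x| ≤ C},
      MeasurableSpace.comap
        (fun x : ℕ → E =>
          Filter.limsup (fun n => (∑ i ∈ Finset.range n, (f : E → ℝ) (x i)) / (n : ℝ))
            atTop)
        inferInstance) :
    ∀ A : Set (ℕ → E), MeasurableSet[𝒱] A →
      Measure.map (fun ω (i : ℕ) => X (i + 1) ω) μ A = ∫⁻ ω, αinf ω A ∂μ := by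
  obtain rfl : αinf = fun ω ↦ Measure.infinitePi fun _ ↦ α ω :=
    funext fun ω ↦ eq_infinitePi_of_forall_fin _ (hαinf ω)
  let κ : Kernel Ω E := ⟨α, Measure.measurable_of_measurable_coe _ hαmeas⟩
  have : IsMarkovKernel κ := ⟨hαprob⟩
  have hY := hcid.isCID hX h𝒢
  subst h𝒱
  exact fun A hA ↦ (Measure.map_apply hY.measurable_averageLimsupSpace hA).trans
    (stmt14_general (κ := κ) hY hα hA)
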